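/- Let i, k ∈ ℍ be standard quaternion units. Suppose R₋, S₋, R₊, S₊ are unit quaternions with R₋·S₋ = S₋·R₋ and R₊·S₊ = S₊·R₊. Then there exist a unit quaternion u, real numbers α₋, β₋, α₊, β₊, and γ ∈ [0, π] such that u·R₋·u⁻¹ = exp(α₋·i), u·S₋·u⁻¹ = exp(β₋·i), u·R₊·u⁻¹ = exp((γ/2)·k)·exp(α₊·i)·exp(−(γ/2)·k), and u·S₊·u⁻¹ = exp((γ/2)·k)·exp(β₊·i)·exp(−(γ/2)·k). (This is the surjectivity of the parameterization Ψ of the level set κ⁻¹(1) of the genus two character variety.) -/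

import Mathlib

noncomputable section

/-- The standard quaternion unit `i`. -/
def qi : Quaternion ℝ := ⟨0, 1, 0, 0⟩

/-- The standard quaternion unit `k`. -/
def qk : Quaternion ℝ := ⟨0, 0, 0, 1⟩

/-- `exp(θ·p) = cos θ + (sin θ)·p` for a purely imaginary unit quaternion `p`. -/
def qexp (θ : ℝ) (p : Quaternion ℝ) : Quaternion ℝ :=
  ((Real.cos θ : ℝ) : Quaternion ℝ) + Real.sin θ • p

def mkq (a b c d : ℝ) : Quaternion ℝ := ⟨a, b, c, d⟩

@[simp] lemma mkq_re (a b c d : ℝ) : (mkq a b c d).re = a := rfl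
@[simp] lemma mkq_imI (a b c d : ℝ) : (mkq a b c d).imI = b := rfl
@[simp] lemma mkq_imJ (a b c d : ℝ) : (mkq a b c d).imJ = c := rfl
@[simp] lemma mkq_imK (a b c d : ℝ) : (mkq a b c d).imK = d := rfl
lemma qi_eq : qi = mkq 0 1 0 0 := rfl
lemma qk_eq : qk = mkq 0 0 0 1 := rfl
@[simp] lemma one_re' : (1 : Quaternion ℝ).re = 1 := rfl
@[simp] lemma zero_re' : (0 : Quaternion ℝ).re = 0 := rfl
@[simp] lemma zero_imJ' : (0 : Quaternion ℝ).imJ = 0 := rfl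
@[simp] lemma zero_imK' : (0 : Quaternion ℝ).imK = 0 := rfl
@[simp] lemma one_imI' : (1 : Quaternion ℝ).imI = 0 := rfl
@[simp] lemma one_imJ' : (1 : Quaternion ℝ).imJ = 0 := rfl
@[simp] lemma one_imK' : (1 : Quaternion ℝ).imK = 0 := rfl

lemma exists_angle (a b : ℝ) (h : a ^ 2 + b ^ 2 = 1) : ∃ θ : ℝ, Real.cos θ = a ∧ Real.sin θ = b := by
  have hn : ‖(⟨a, b⟩ : ℂ)‖ = 1 := by
    rw [← sq_eq_sq₀ (norm_nonneg _) zero_le_one, ← Complex.normSq_eq_norm_sq, Complex.normSq_mk]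
    linarith
  have h0 : (⟨a, b⟩ : ℂ) ≠ 0 := by
    intro h; rw [h] at hn; simp at hn
  refine ⟨Complex.arg ⟨a, b⟩, ?_, ?_⟩
  · rw [Complex.cos_arg h0, hn]; simp
  · rw [Complex.sin_arg, hn]; simp

lemma unit_iff (q : Quaternion ℝ) :
    ‖q‖ = 1 ↔ q.re ^ 2 + q.imI ^ 2 + q.imJ ^ 2 + q.imK ^ 2 = 1 := by
  rw [← Quaternion.normSq_def', Quaternion.normSq_eq_norm_mul_self]
  constructor
  · intro h; rw [h]; norm_num
  · intro h; nlinarith [norm_nonneg q]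

/-- Pure unit direction parallel to two parallel imaginary vectors. -/
lemma exists_dir (a b c x y z : ℝ) (h1 : b * z = c * y) (h2 : c * x = a * z) (h3 : a * y = b * x) :
    ∃ p q r s t : ℝ, p ^ 2 + q ^ 2 + r ^ 2 = 1 ∧ a = s * p ∧ b = s * q ∧ c = s * r ∧
      x = t * p ∧ y = t * q ∧ z = t * r := by
  have key : ∀ a b c x y z : ℝ, b * z = c * y → c * x = a * z → a * y = b * x →
      0 < a ^ 2 + b ^ 2 + c ^ 2 →
      ∃ p q r s t : ℝ, p ^ 2 + q ^ 2 + r ^ 2 = 1 ∧ a = s * p ∧ b = s * q ∧ c = s * r ∧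
      x = t * p ∧ y = t * q ∧ z = t * r := by
    intro a b c x y z h1 h2 h3 hp
    have hn := Real.sqrt_pos.2 hp
    have hs := Real.sq_sqrt hp.le
    set n := Real.sqrt (a ^ 2 + b ^ 2 + c ^ 2)
    have hn' := hn.ne'
    refine ⟨a / n, b / n, c / n, n, (a * x + b * y + c * z) / n, ?_, ?_, ?_, ?_, ?_, ?_, ?_⟩
    · field_simp; linarith
    · field_simp
    · field_simp
    · field_simp
    · field_simp; rw [hs]; linear_combination b * (-h3) + c * h2
    · field_simp; rw [hs]; linear_combination a * h3 - c * h1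
    · field_simp; rw [hs]; linear_combination b * h1 - a * h2
  rcases (show 0 ≤ a ^ 2 + b ^ 2 + c ^ 2 by positivity).lt_or_eq with h | h
  · exact key a b c x y z h1 h2 h3 h
  rcases (show 0 ≤ x ^ 2 + y ^ 2 + z ^ 2 by positivity).lt_or_eq with h' | h'
  · obtain ⟨p, q, r, s, t, h0, ha, hb, hc, hx, hy, hz⟩ :=
      key x y z a b c (by linarith) (by linarith) (by linarith) h'
    exact ⟨p, q, r, t, s, h0, hx, hy, hz, ha, hb, hc⟩
  · refine ⟨1, 0, 0, 0, 0, by norm_num, ?_, ?_, ?_, ?_, ?_, ?_⟩ <;> nlinarith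

lemma exists_axis (R S : Quaternion ℝ) (hR : ‖R‖ = 1) (hS : ‖S‖ = 1) (hc : R * S = S * R) :
    ∃ (p : Quaternion ℝ) (α β : ℝ), p.re = 0 ∧ ‖p‖ = 1 ∧ R = qexp α p ∧ S = qexp β p := by
  rw [unit_iff] at hR hS
  have e1 := congrArg QuaternionAlgebra.imI hc
  have e2 := congrArg QuaternionAlgebra.imJ hc
  have e3 := congrArg QuaternionAlgebra.imK hc
  simp only [Quaternion.imI_mul, Quaternion.imJ_mul, Quaternion.imK_mul] at e1 e2 e3
  obtain ⟨p, q, r, s, t, h0, ha, hb, hc, hx, hy, hz⟩ :=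
    exists_dir R.imI R.imJ R.imK S.imI S.imJ S.imK (by linarith) (by linarith) (by linarith)
  obtain ⟨α, hα, hα'⟩ := exists_angle R.re s (by
    rw [ha, hb, hc] at hR; linear_combination hR - s ^ 2 * h0)
  obtain ⟨β, hβ, hβ'⟩ := exists_angle S.re t (by
    rw [hx, hy, hz] at hS; linear_combination hS - t ^ 2 * h0)
  refine ⟨mkq 0 p q r, α, β, rfl, ?_, ?_, ?_⟩
  · rw [unit_iff]; simp only [mkq_re, mkq_imI, mkq_imJ, mkq_imK]; linarith
  · ext <;> simp [qexp, hα, hα', ha, hb, hc]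
  · ext <;> simp [qexp, hβ, hβ', hx, hy, hz]

lemma inv_eq_star {u : Quaternion ℝ} (h : ‖u‖ = 1) : u⁻¹ = star u := by
  rw [Quaternion.inv_def, Quaternion.normSq_eq_norm_mul_self, h]; simp

lemma conj_qexp {u : Quaternion ℝ} (h : ‖u‖ = 1) (θ : ℝ) (p : Quaternion ℝ) :
    u * qexp θ p * u⁻¹ = qexp θ (u * p * u⁻¹) := by
  have h0 : u ≠ 0 := by intro h'; simp [h'] at h
  unfold qexp
  rw [mul_add, add_mul, ← Quaternion.coe_commutes, mul_assoc _ u, mul_inv_cancel₀ h0]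
  simp

lemma to_qi (p : Quaternion ℝ) (hp : p.re = 0) (h : ‖p‖ = 1) :
    ∃ u : Quaternion ℝ, ‖u‖ = 1 ∧ u * p * u⁻¹ = qi := by
  have h' := (unit_iff p).1 h
  by_cases hw : 1 - qi * p = 0
  · refine ⟨mkq 0 0 1 0, by rw [unit_iff]; simp, ?_⟩
    rw [inv_eq_star (by rw [unit_iff]; simp)]
    have e1 := congrArg QuaternionAlgebra.re hw
    have e2 := congrArg QuaternionAlgebra.imJ hw
    have e3 := congrArg QuaternionAlgebra.imK hw
    simp [qi_eq] at e1 e2 e3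
    ext <;> simp [qi_eq] <;> linarith
  · have hn : ‖1 - qi * p‖ ≠ 0 := by simpa using hw
    have hpp : p * p = -1 := by
      ext <;> simp [hp] <;> nlinarith
    have hii : qi * qi = -1 := by
      ext <;> simp [qi_eq]
    refine ⟨(‖1 - qi * p‖⁻¹ : ℝ) • (1 - qi * p), ?_, ?_⟩
    · rw [norm_smul]; simp [hn]
    · have hne : (‖1 - qi * p‖⁻¹ : ℝ) • (1 - qi * p) ≠ 0 := smul_ne_zero (inv_ne_zero hn) hw
      rw [mul_inv_eq_iff_eq_mul₀ hne, smul_mul_assoc, mul_smul_comm, sub_mul, mul_sub, mul_assoc,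
        hpp, ← mul_assoc, hii]
      congr 1
      simp [add_comm]

lemma rotate (q : Quaternion ℝ) (hq : q.re = 0) (h : ‖q‖ = 1) :
    ∃ (v : Quaternion ℝ) (γ : ℝ), ‖v‖ = 1 ∧ 0 ≤ γ ∧ γ ≤ Real.pi ∧ v * qi * v⁻¹ = qi ∧
      v * q * v⁻¹ = mkq 0 (Real.cos γ) (Real.sin γ) 0 := by
  have h' := (unit_iff q).1 h
  rw [hq] at h'
  set w : ℂ := ⟨q.imJ, q.imK⟩ with hw
  have hwn : ‖w‖ = Real.sqrt (1 - q.imI ^ 2) := by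
    rw [Complex.norm_def, hw, Complex.normSq_mk]; congr 1; linarith
  have hwc : ‖w‖ * Real.cos w.arg = q.imJ := Complex.norm_mul_cos_arg w
  have hws : ‖w‖ * Real.sin w.arg = q.imK := Complex.norm_mul_sin_arg w
  set t := w.arg / 2 with ht
  have ht2 : w.arg = 2 * t := by rw [ht]; ring
  rw [ht2, Real.cos_two_mul] at hwc
  rw [ht2, Real.sin_two_mul] at hws
  have hcs := Real.sin_sq_add_cos_sq t
  have hv : ‖mkq (Real.cos t) (-Real.sin t) 0 0‖ = 1 := by
    rw [unit_iff]; simp only [mkq_re, mkq_imI, mkq_imJ, mkq_imK]; linarith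
  refine ⟨_, Real.arccos q.imI, hv, Real.arccos_nonneg _, Real.arccos_le_pi _, ?_, ?_⟩
  · rw [inv_eq_star hv]
    ext <;> simp [qi_eq] <;> linarith
  · rw [inv_eq_star hv, Real.cos_arccos (by nlinarith) (by nlinarith), Real.sin_arccos, ← hwn]
    generalize Real.cos t = c at *
    generalize Real.sin t = s at *
    ext
    · simp [hq]; ring
    · simp [hq]; linear_combination q.imI * hcs
    · simp [hq]; rw [← hwc, ← hws]
      linear_combination (‖w‖ * (2 * c ^ 2 + 1)) * hcs
    · simp [hq]; rw [← hwc, ← hws]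
      linear_combination (-2 * ‖w‖ * s * c) * hcs

lemma k_conj (γ : ℝ) : ‖qexp (γ / 2) qk‖ = 1 ∧ (qexp (γ / 2) qk)⁻¹ = qexp (-(γ / 2)) qk ∧
    qexp (γ / 2) qk * qi * (qexp (γ / 2) qk)⁻¹ = mkq 0 (Real.cos γ) (Real.sin γ) 0 := by
  have h1 : ‖qexp (γ / 2) qk‖ = 1 := by
    rw [unit_iff]; simp [qexp, qk_eq]
  have hγ : γ = 2 * (γ / 2) := by ring
  refine ⟨h1, ?_, ?_⟩
  · rw [inv_eq_star h1]; ext <;> simp [qexp, qk_eq]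
  · rw [inv_eq_star h1]
    have hc : Real.cos γ = Real.cos (γ / 2) ^ 2 - Real.sin (γ / 2) ^ 2 := by
      conv_lhs => rw [hγ]
      rw [Real.cos_two_mul']
    have hs : Real.sin γ = 2 * Real.sin (γ / 2) * Real.cos (γ / 2) := by
      conv_lhs => rw [hγ]
      rw [Real.sin_two_mul]
    rw [hc, hs]
    ext <;> simp [qexp, qk_eq, qi_eq] <;> ring

/-- Surjectivity of the parameterization `Ψ` of the level set `κ⁻¹(1)` of the genus two
character variety: any quadruple of unit quaternions with `R₋S₋ = S₋R₋` and
`R₊S₊ = S₊R₊` is simultaneously conjugate to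
`(exp(α₋i), exp(β₋i), exp((γ/2)k)exp(α₊i)exp(−(γ/2)k), exp((γ/2)k)exp(β₊i)exp(−(γ/2)k))`
for some reals `α₋, β₋, α₊, β₊` and `γ ∈ [0,π]`. -/
theorem psi_surjective (Rm Sm Rp Sp : Quaternion ℝ)
    (hRm : ‖Rm‖ = 1) (hSm : ‖Sm‖ = 1) (hRp : ‖Rp‖ = 1) (hSp : ‖Sp‖ = 1)
    (hcm : Rm * Sm = Sm * Rm) (hcp : Rp * Sp = Sp * Rp) :
    ∃ (u : Quaternion ℝ) (αm βm αp βp γ : ℝ), ‖u‖ = 1 ∧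
      0 ≤ γ ∧ γ ≤ Real.pi ∧
      u * Rm * u⁻¹ = qexp αm qi ∧
      u * Sm * u⁻¹ = qexp βm qi ∧
      u * Rp * u⁻¹ = qexp (γ / 2) qk * qexp αp qi * qexp (-(γ / 2)) qk ∧
      u * Sp * u⁻¹ = qexp (γ / 2) qk * qexp βp qi * qexp (-(γ / 2)) qk := by
  obtain ⟨p, αm, βm, hp, hpn, rfl, rfl⟩ := exists_axis Rm Sm hRm hSm hcm
  obtain ⟨q, αp, βp, hq, hqn, rfl, rfl⟩ := exists_axis Rp Sp hRp hSp hcp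
  obtain ⟨u, hu, hup⟩ := to_qi p hp hpn
  have hr : (u * q * u⁻¹).re = 0 := by
    rw [inv_eq_star hu]; simp [hq]; ring
  have hrn : ‖u * q * u⁻¹‖ = 1 := by simp [hu, hqn]
  obtain ⟨v, γ, hv, h0, hpi, hvi, hvq⟩ := rotate _ hr hrn
  have huv : ‖v * u‖ = 1 := by simp [hu, hv]
  obtain ⟨hk, hki, hkc⟩ := k_conj γ
  have e1 : v * u * p * (v * u)⁻¹ = qi := by
    rw [← hvi, ← hup, mul_inv_rev]; simp only [mul_assoc]
  have e2 : v * u * q * (v * u)⁻¹ = qexp (γ / 2) qk * qi * (qexp (γ / 2) qk)⁻¹ := by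
    rw [hkc, ← hvq, mul_inv_rev]; simp only [mul_assoc]
  refine ⟨v * u, αm, βm, αp, βp, γ, huv, h0, hpi, ?_, ?_, ?_, ?_⟩
  · rw [conj_qexp huv, e1]
  · rw [conj_qexp huv, e1]
  · rw [conj_qexp huv, e2, ← hki, conj_qexp hk]
  · rw [conj_qexp huv, e2, ← hki, conj_qexp hk]
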